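/- arXiv:1912.04177 — 2 statements merged into one kernel-verified Lean document; each statement's English description precedes it below -/
import Mathlib

section
/- There are absolute constants c₀ > 0 and c₁ > 0 with the following property. Let A be an n×n real positive semidefinite matrix and N an n×n real matrix such that ‖N‖_F² ≤ η ‖A‖_F² for some 0 < η ≤ 1 and ‖N_{·,j}‖₂² ≤ ‖A_{·,j}‖₂² for every j; assume (A+N)_{jj} > 0 for all j, and set p_j = q_j = (A+N)_{jj}/tr(A+N) and φ = max_j A_{jj}/(A+N)_{jj}. Let 0 < ε < 1, let k ≥ 1 be an integer, and let t be an integer with t ≥ c₀ · φ · √n · k² · log²(n) / ε². Sample indices j₁,…,j_t i.i.d. from q and, independently, indices i₁,…,i_t i.i.d. from p; form the n×t matrix C with l-th column (A+N)_{·,j_l}/√(t·q_{j_l}) and the t×t matrix R whose l-th row is C_{i_l,·}/√(t·p_{i_l}). Then with probability at least 2/3 over both samplings, simultaneously for every t×t orthogonal projection X of rank at most k: | ‖R − R X‖_F² − ‖C − C X‖_F² | ≤ c₁ · (ε + √η) · ‖A‖_F². -/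
open Matrix

noncomputable def frobeniusSq {m n : ℕ} (M : Matrix (Fin m) (Fin n) ℝ) : ℝ :=
  ∑ i, ∑ j, (M i j)^2

/-- The n×t column-sampling-and-rescaling matrix: its l-th column is
(1/√(t·q(jv l))) times the standard basis vector e_{jv l}. -/
noncomputable def colSample {n : ℕ} (t : ℕ) (q : Fin n → ℝ) (jv : Fin t → Fin n) :
    Matrix (Fin n) (Fin t) ℝ :=
  Matrix.of fun i l => if i = jv l then (Real.sqrt (t * q (jv l)))⁻¹ else 0

/-- Probability, under i.i.d. sampling of t indices with distribution q, of the event E. -/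
noncomputable def iidProb {n : ℕ} (t : ℕ) (q : Fin n → ℝ) (E : Set (Fin t → Fin n)) : ℝ :=
  ∑ jv : Fin t → Fin n, Set.indicator E (fun v => ∏ l, q (v l)) jv

/-- Probability, under two independent i.i.d. samples of t indices each (with
distributions q and p respectively), of the event E. -/
noncomputable def iidProb2 {n : ℕ} (t : ℕ) (q p : Fin n → ℝ)
    (E : Set ((Fin t → Fin n) × (Fin t → Fin n))) : ℝ :=
  ∑ w : (Fin t → Fin n) × (Fin t → Fin n),
    Set.indicator E (fun w => (∏ l, q (w.1 l)) * (∏ l, p (w.2 l))) w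

section prob
variable {n t : ℕ} {q : Fin n → ℝ}

noncomputable def Es (q : Fin n → ℝ) (F : (Fin t → Fin n) → ℝ) : ℝ :=
  ∑ v : Fin t → Fin n, (∏ l, q (v l)) * F v

lemma Es_prod (G : Fin t → Fin n → ℝ) :
    Es q (fun v => ∏ l, G l (v l)) = ∏ l, ∑ j, q j * G l j := by
  unfold Es
  simp only [← Finset.prod_mul_distrib]
  rw [Finset.prod_univ_sum, Fintype.piFinset_univ]

lemma Es_const (hq : ∑ j, q j = 1) (c : ℝ) : Es (t := t) q (fun _ => c) = c := by
  have := Es_prod (t := t) (q := q) (fun _ _ => 1)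
  simp only [mul_one, hq, Finset.prod_const_one] at this
  unfold Es at *
  rw [← Finset.sum_mul]
  simp only [mul_one] at this
  rw [this, one_mul]

lemma Es_single (hq : ∑ j, q j = 1) (g : Fin n → ℝ) (l : Fin t) :
    Es q (fun v => g (v l)) = ∑ j, q j * g j := by
  have := Es_prod (t := t) (q := q) (fun a j => if a = l then g j else 1)
  rw [Finset.prod_eq_single l] at this
  · simpa using this
  · intro b _ hb; simp [hb, hq]
  · simp

lemma Es_pair (hq : ∑ j, q j = 1) (g h : Fin n → ℝ) (l m : Fin t) (hlm : l ≠ m) :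
    Es q (fun v => g (v l) * h (v m)) = (∑ j, q j * g j) * ∑ j, q j * h j := by
  have := Es_prod (t := t) (q := q)
    (fun a j => (if a = l then g j else 1) * (if a = m then h j else 1))
  simp only [Finset.prod_mul_distrib, Finset.prod_ite_eq', Finset.mem_univ, if_true] at this
  rw [this]
  rw [← Finset.prod_subset (Finset.subset_univ {l, m}), Finset.prod_pair hlm]
  · simp [hlm, hlm.symm]
  · intro x _ hx
    simp only [Finset.mem_insert, Finset.mem_singleton, not_or] at hx
    simp [hx.1, hx.2, hq]

lemma Es_add (F G : (Fin t → Fin n) → ℝ) : Es q (fun v => F v + G v) = Es q F + Es q G := by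
  simp [Es, mul_add, Finset.sum_add_distrib]

lemma Es_smul (c : ℝ) (F : (Fin t → Fin n) → ℝ) : Es q (fun v => c * F v) = c * Es q F := by
  simp only [Es, Finset.mul_sum]
  exact Finset.sum_congr rfl fun _ _ => by ring

lemma Es_sum {ι : Type*} (s : Finset ι) (F : ι → (Fin t → Fin n) → ℝ) :
    Es q (fun v => ∑ i ∈ s, F i v) = ∑ i ∈ s, Es q (F i) := by
  simp only [Es, Finset.mul_sum]
  rw [Finset.sum_comm]

lemma Es_mono (hq : ∀ j, 0 ≤ q j) (F G : (Fin t → Fin n) → ℝ) (h : ∀ v, F v ≤ G v) :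
    Es q F ≤ Es q G := by
  unfold Es
  exact Finset.sum_le_sum fun v _ =>
    mul_le_mul_of_nonneg_left (h v) (Finset.prod_nonneg fun _ _ => hq _)

lemma Es_sq (hq : ∑ j, q j = 1) (g : Fin n → ℝ) (hg : ∑ j, q j * g j = 0) :
    Es q (fun v : Fin t → Fin n => (∑ l, g (v l)) ^ 2) = t * ∑ j, q j * g j ^ 2 := by
  have e : (fun v : Fin t → Fin n => (∑ l, g (v l)) ^ 2)
      = fun v => ∑ l, ∑ m, g (v l) * g (v m) := by
    funext v; rw [sq, Finset.sum_mul_sum]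
  rw [e, Es_sum]
  have : ∀ l ∈ (Finset.univ : Finset (Fin t)),
      Es q (fun v => ∑ m, g (v l) * g (v m)) = ∑ j, q j * g j ^ 2 := by
    intro l _
    rw [Es_sum, Finset.sum_eq_single l]
    · rw [← Es_single hq (fun j => g j ^ 2) l]
      simp only [sq]
    · intro m _ hm
      rw [Es_pair hq g g l m hm.symm, hg, zero_mul]
    · simp
  rw [Finset.sum_congr rfl this]; simp

noncomputable def Zs (q : Fin n → ℝ) (f : Fin n → ℝ) (v : Fin t → Fin n) : ℝ :=
  ∑ l, f (v l) / (t * q (v l))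

lemma Es_Zs (hq : ∑ j, q j = 1) (hp : ∀ j, 0 < q j) (ht : 0 < t) (f : Fin n → ℝ) :
    Es q (Zs (t := t) q f) = ∑ j, f j := by
  have e : (Zs (t := t) q f) = fun v => ∑ l, (fun j => f j / (t * q j)) (v l) := rfl
  have ht' : (t : ℝ) ≠ 0 := by positivity
  rw [e, Es_sum, Finset.sum_congr rfl fun l _ => Es_single hq (fun j => f j / (t * q j)) l]
  simp only [Finset.sum_const, Finset.card_univ, Fintype.card_fin, nsmul_eq_mul]
  rw [Finset.mul_sum]
  refine Finset.sum_congr rfl fun j _ => ?_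
  have := (hp j).ne'
  field_simp

lemma Es_var (hq : ∑ j, q j = 1) (hp : ∀ j, 0 < q j) (ht : 0 < t) (f : Fin n → ℝ) :
    Es q (fun v : Fin t → Fin n => (Zs q f v - ∑ j, f j) ^ 2) ≤ (∑ j, f j ^ 2 / q j) / t := by
  have ht' : (t : ℝ) ≠ 0 := by positivity
  set μ := ∑ j, f j with hμ
  have e : (fun v : Fin t → Fin n => (Zs q f v - μ) ^ 2) =
      fun v => (∑ l, (fun j => f j / (t * q j) - μ / t) (v l)) ^ 2 := by
    funext v
    simp only [Zs, Finset.sum_sub_distrib, Finset.sum_const, Finset.card_univ, Fintype.card_fin,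
      nsmul_eq_mul]
    rw [mul_div_cancel₀ _ ht']
  have k1 : ∑ j, q j * (f j / (t * q j) - μ / t) = 0 := by
    have : ∀ j ∈ (Finset.univ : Finset (Fin n)),
        q j * (f j / (t * q j) - μ / t) = f j / t - q j * (μ / t) := by
      intro j _
      have := (hp j).ne'
      field_simp
    rw [Finset.sum_congr rfl this, Finset.sum_sub_distrib, ← Finset.sum_mul, hq,
      ← Finset.sum_div, ← hμ]
    ring
  rw [e, Es_sq hq _ k1]
  have k2 : ∀ j ∈ (Finset.univ : Finset (Fin n)), q j * (f j / (t * q j) - μ / t) ^ 2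
      = (f j ^ 2 / q j - 2 * μ * f j + q j * μ ^ 2) / t ^ 2 := by
    intro j _
    have := (hp j).ne'
    field_simp
    ring
  rw [Finset.sum_congr rfl k2, ← Finset.sum_div, Finset.sum_add_distrib, Finset.sum_sub_distrib,
    ← Finset.mul_sum, ← Finset.sum_mul, hq, ← hμ]
  have : (t : ℝ) * ((∑ j, f j ^ 2 / q j - 2 * μ * μ + 1 * μ ^ 2) / t ^ 2)
     = (∑ j, f j ^ 2 / q j - μ ^ 2) / t := by field_simp; ring
  rw [this]
  gcongr
  nlinarith [sq_nonneg μ]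

lemma Es_Zs_sq (hq : ∑ j, q j = 1) (hp : ∀ j, 0 < q j) (ht : 0 < t) (f : Fin n → ℝ) :
    Es q (fun v : Fin t → Fin n => (Zs q f v) ^ 2)
      ≤ (∑ j, f j) ^ 2 + (∑ j, f j ^ 2 / q j) / t := by
  have h1 := Es_var hq hp ht f
  have h2 := Es_Zs hq hp ht f
  set μ := ∑ j, f j
  have e : (fun v : Fin t → Fin n => (Zs q f v) ^ 2) =
    fun v => (Zs q f v - μ) ^ 2 + ((2 * μ) * Zs q f v + (-μ ^ 2)) := by funext v; ring
  rw [e, Es_add, Es_add, Es_smul, h2, Es_const hq]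
  linarith [h1]

end prob
section la
variable {n t : ℕ} {q : Fin n → ℝ}

lemma psd_cs {A : Matrix (Fin n) (Fin n) ℝ} (hA : A.PosSemidef) (x y : Fin n → ℝ) :
    (x ⬝ᵥ A *ᵥ y) ^ 2 ≤ (x ⬝ᵥ A *ᵥ x) * (y ⬝ᵥ A *ᵥ y) := by
  have hT : Aᵀ = A := by
    have := hA.1
    rwa [IsHermitian, conjTranspose_eq_transpose_of_trivial] at this
  have hs : y ⬝ᵥ A *ᵥ x = x ⬝ᵥ A *ᵥ y := by
    rw [dotProduct_mulVec, dotProduct_comm, ← mulVec_transpose, hT]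
  have h : ∀ s : ℝ, 0 ≤ (y ⬝ᵥ A *ᵥ y) * (s * s) + (2 * (x ⬝ᵥ A *ᵥ y)) * s + (x ⬝ᵥ A *ᵥ x) := by
    intro s
    have := hA.dotProduct_mulVec_nonneg (x + s • y)
    simp only [star_trivial, mulVec_add, mulVec_smul, add_dotProduct, dotProduct_add,
      smul_dotProduct, dotProduct_smul, smul_eq_mul, hs] at this
    linarith
  have := discrim_le_zero h
  unfold discrim at this
  nlinarith

lemma psd_entry {A : Matrix (Fin n) (Fin n) ℝ} (hA : A.PosSemidef) (i j : Fin n) :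
    (A i j) ^ 2 ≤ A i i * A j j := by
  simpa using psd_cs hA (Pi.single i 1) (Pi.single j 1)

lemma psd_diag {A : Matrix (Fin n) (Fin n) ℝ} (hA : A.PosSemidef) (i : Fin n) : 0 ≤ A i i := by
  simpa using hA.dotProduct_mulVec_nonneg (Pi.single i 1)

lemma frob_nonneg {m n : ℕ} (M : Matrix (Fin m) (Fin n) ℝ) : 0 ≤ frobeniusSq M := by
  unfold frobeniusSq; positivity

lemma quad_le (A : Matrix (Fin n) (Fin n) ℝ) (y : Fin n → ℝ) :
    y ⬝ᵥ A *ᵥ y ≤ √(frobeniusSq A) * ∑ i, y i ^ 2 := by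
  have e : y ⬝ᵥ A *ᵥ y = ∑ z : Fin n × Fin n, A z.1 z.2 * (y z.1 * y z.2) := by
    simp only [dotProduct, mulVec, Finset.mul_sum, Fintype.sum_prod_type]
    exact Finset.sum_congr rfl fun _ _ => Finset.sum_congr rfl fun _ _ => by ring
  have cs := Finset.sum_mul_sq_le_sq_mul_sq (Finset.univ : Finset (Fin n × Fin n))
    (fun z => A z.1 z.2) (fun z => y z.1 * y z.2)
  rw [← e] at cs
  have e1 : ∑ z : Fin n × Fin n, (A z.1 z.2) ^ 2 = frobeniusSq A := by
    simp [frobeniusSq, Fintype.sum_prod_type]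
  have e2 : ∑ z : Fin n × Fin n, (y z.1 * y z.2) ^ 2 = (∑ i, y i ^ 2) ^ 2 := by
    rw [sq (∑ i, y i ^ 2), Finset.sum_mul_sum, Fintype.sum_prod_type]
    simp [mul_pow]
  rw [e1, e2] at cs
  have h0 : 0 ≤ ∑ i, y i ^ 2 := by positivity
  refine le_of_sq_le_sq ?_ (by positivity)
  rw [mul_pow, Real.sq_sqrt (frob_nonneg A)]
  exact cs

lemma psd_row {A : Matrix (Fin n) (Fin n) ℝ} (hA : A.PosSemidef) (i : Fin n) :
    (∑ j, (A i j) ^ 2) ^ 2 ≤ A i i * (√(frobeniusSq A) * ∑ j, (A i j) ^ 2) := by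
  have h := psd_cs hA (Pi.single i 1) (A i)
  have h2 := quad_le A (A i)
  have e : Pi.single i 1 ⬝ᵥ A *ᵥ (A i) = ∑ j, (A i j) ^ 2 := by
    simp [mulVec, dotProduct, sq, Pi.single_apply]
  have e2 : Pi.single i (1 : ℝ) ⬝ᵥ A *ᵥ Pi.single i 1 = A i i := by simp
  rw [e, e2] at h
  exact h.trans (mul_le_mul_of_nonneg_left h2 (psd_diag hA i))

lemma trace_sq_le (B : Matrix (Fin n) (Fin n) ℝ) : B.trace ^ 2 ≤ n * frobeniusSq B := by
  have h := sq_sum_le_card_mul_sum_sq (s := (Finset.univ : Finset (Fin n))) (f := fun i => B i i)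
  have h2 : ∑ i, (B i i) ^ 2 ≤ frobeniusSq B := by
    refine Finset.sum_le_sum fun i _ => ?_
    exact Finset.single_le_sum (f := fun j => (B i j) ^ 2) (fun _ _ => sq_nonneg _)
      (Finset.mem_univ i)
  simp only [Finset.card_univ, Fintype.card_fin] at h
  exact h.trans (by gcongr)

lemma frob_add_le {m n : ℕ} (A N : Matrix (Fin m) (Fin n) ℝ) :
    frobeniusSq (A + N) ≤ 2 * frobeniusSq A + 2 * frobeniusSq N := by
  simp only [frobeniusSq, Finset.mul_sum, ← Finset.sum_add_distrib]
  refine Finset.sum_le_sum fun i _ => Finset.sum_le_sum fun j _ => ?_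
  simp only [Matrix.add_apply]
  nlinarith [sq_nonneg (A i j - N i j)]

lemma frob_add_sub_le {m n : ℕ} (a b : Matrix (Fin m) (Fin n) ℝ) (s : ℝ) (hs : 0 < s) :
    |frobeniusSq (a + b) - frobeniusSq a| ≤
      s * frobeniusSq a + frobeniusSq b / s + frobeniusSq b := by
  simp only [frobeniusSq, Finset.mul_sum, Finset.sum_div, ← Finset.sum_add_distrib,
    ← Finset.sum_sub_distrib]
  refine (Finset.abs_sum_le_sum_abs _ _).trans (Finset.sum_le_sum fun i _ => ?_)
  refine (Finset.abs_sum_le_sum_abs _ _).trans (Finset.sum_le_sum fun j _ => ?_)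
  simp only [Matrix.add_apply]
  have h1 : 0 ≤ (s * a i j - b i j) ^ 2 / s := by positivity
  have h2 : 0 ≤ (s * a i j + b i j) ^ 2 / s := by positivity
  have e1 : (s * a i j - b i j) ^ 2 / s = s * a i j ^ 2 - 2 * (a i j * b i j) + b i j ^ 2 / s := by
    field_simp
    ring
  have e2 : (s * a i j + b i j) ^ 2 / s = s * a i j ^ 2 + 2 * (a i j * b i j) + b i j ^ 2 / s := by
    field_simp
    ring
  rw [abs_le]
  constructor <;> nlinarith [sq_nonneg (b i j)]

lemma frob_trace {m n : ℕ} (M : Matrix (Fin m) (Fin n) ℝ) : frobeniusSq M = (Mᵀ * M).trace := by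
  simp only [frobeniusSq, Matrix.trace, Matrix.diag, Matrix.mul_apply, Matrix.transpose_apply]
  rw [Finset.sum_comm]
  simp [sq]

lemma frob_proj {m : ℕ} (M : Matrix (Fin m) (Fin t) ℝ) (X : Matrix (Fin t) (Fin t) ℝ)
    (h1 : Xᵀ = X) (h2 : X * X = X) :
    frobeniusSq (M - M * X) = (Mᵀ * M).trace - (Mᵀ * M * X).trace := by
  rw [frob_trace, transpose_sub, transpose_mul, h1]
  have e : (Mᵀ - X * Mᵀ) * (M - M * X) = Mᵀ * M - Mᵀ * M * X - X * (Mᵀ * M - Mᵀ * M * X) := by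
    simp only [Matrix.sub_mul, Matrix.mul_sub, Matrix.mul_assoc]
    abel
  rw [e, trace_sub, trace_sub, trace_mul_comm X, Matrix.sub_mul, Matrix.mul_assoc (Mᵀ * M) X X, h2]
  simp

lemma frob_proj_le {m : ℕ} (M : Matrix (Fin m) (Fin t) ℝ) (X : Matrix (Fin t) (Fin t) ℝ)
    (h1 : Xᵀ = X) (h2 : X * X = X) : frobeniusSq (M - M * X) ≤ frobeniusSq M := by
  rw [frob_proj M X h1 h2, ← frob_trace]
  have := frob_nonneg (M * X)
  rw [frob_trace, transpose_mul, h1, Matrix.mul_assoc, trace_mul_comm, ← Matrix.mul_assoc,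
    Matrix.mul_assoc _ X X, h2] at this
  linarith

lemma frob_X (X : Matrix (Fin t) (Fin t) ℝ) (h1 : Xᵀ = X) (h2 : X * X = X) :
    frobeniusSq X = X.rank := by
  rw [frob_trace, h1, h2]
  have hi : IsIdempotentElem (Matrix.toLin' X) := by
    unfold IsIdempotentElem
    rw [Module.End.mul_eq_comp, ← Matrix.toLin'_mul, h2]
  have := (LinearMap.IsIdempotentElem.isProj_range _ hi).trace
  rw [Matrix.trace_toLin'_eq] at this
  rw [this]
  rfl

lemma trace_mul_sq_le (D X : Matrix (Fin t) (Fin t) ℝ) :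
    ((D * X).trace) ^ 2 ≤ frobeniusSq D * frobeniusSq Xᵀ := by
  have e : (D * X).trace = ∑ z : Fin t × Fin t, D z.1 z.2 * Xᵀ z.1 z.2 := by
    simp [Matrix.trace, Matrix.mul_apply, Fintype.sum_prod_type]
  have cs := Finset.sum_mul_sq_le_sq_mul_sq (Finset.univ : Finset (Fin t × Fin t))
    (fun z => D z.1 z.2) (fun z => Xᵀ z.1 z.2)
  rw [e]
  simpa only [frobeniusSq, Fintype.sum_prod_type] using cs

lemma sample_T {m : ℕ} (M : Matrix (Fin n) (Fin m) ℝ) (u : Fin t → Fin n) (l : Fin t) (b : Fin m) :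
    ((colSample t q u)ᵀ * M) l b = (√(t * q (u l)))⁻¹ * M (u l) b := by
  simp [colSample, Matrix.mul_apply]

lemma sample_S {m : ℕ} (M : Matrix (Fin m) (Fin n) ℝ) (u : Fin t → Fin n) (i : Fin m) (l : Fin t) :
    (M * colSample t q u) i l = M i (u l) * (√(t * q (u l)))⁻¹ := by
  simp [colSample, Matrix.mul_apply]

lemma gram_T (hq : ∀ j, 0 < q j) {m : ℕ} (M : Matrix (Fin n) (Fin m) ℝ) (u : Fin t → Fin n)
    (a b : Fin m) :
    (((colSample t q u)ᵀ * M)ᵀ * ((colSample t q u)ᵀ * M)) a b = Zs q (fun i => M i a * M i b) u := by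
  rw [Matrix.mul_apply, Zs]
  refine Finset.sum_congr rfl fun l _ => ?_
  rw [transpose_apply, sample_T, sample_T]
  have h : 0 ≤ t * q (u l) := mul_nonneg (by positivity) (hq _).le
  have : (√(t * q (u l)))⁻¹ * (√(t * q (u l)))⁻¹ = (t * q (u l))⁻¹ := by
    rw [← mul_inv, Real.mul_self_sqrt h]
  rw [div_eq_mul_inv, ← this]; ring

lemma frob_T (hq : ∀ j, 0 < q j) {m : ℕ} (M : Matrix (Fin n) (Fin m) ℝ) (u : Fin t → Fin n) :
    frobeniusSq ((colSample t q u)ᵀ * M) = Zs q (fun i => ∑ b, (M i b) ^ 2) u := by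
  rw [frob_trace, Matrix.trace]
  simp only [Matrix.diag, gram_T hq, Zs]
  rw [Finset.sum_comm]
  simp [Finset.sum_div, sq]

lemma row_S (hq : ∀ j, 0 < q j) {m : ℕ} (M : Matrix (Fin m) (Fin n) ℝ) (u : Fin t → Fin n)
    (i : Fin m) :
    ∑ l, ((M * colSample t q u) i l) ^ 2 = Zs q (fun j => (M i j) ^ 2) u := by
  rw [Zs]
  refine Finset.sum_congr rfl fun l _ => ?_
  have h : 0 ≤ t * q (u l) := mul_nonneg (by positivity) (hq _).le
  rw [sample_S, mul_pow, inv_pow, Real.sq_sqrt h, div_eq_mul_inv]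

lemma Es_frob_S (h1 : ∑ j, q j = 1) (hq : ∀ j, 0 < q j) (ht : 0 < t) {m : ℕ}
    (M : Matrix (Fin m) (Fin n) ℝ) :
    Es q (fun v : Fin t → Fin n => frobeniusSq (M * colSample t q v)) = frobeniusSq M := by
  simp only [frobeniusSq, row_S hq, Es_sum]
  refine Finset.sum_congr rfl fun i _ => ?_
  exact Es_Zs h1 hq ht _

lemma Es_frob_T (h1 : ∑ j, q j = 1) (hq : ∀ j, 0 < q j) (ht : 0 < t) {m : ℕ}
    (M : Matrix (Fin n) (Fin m) ℝ) :
    Es q (fun v : Fin t → Fin n => frobeniusSq ((colSample t q v)ᵀ * M)) = frobeniusSq M := by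
  simp only [frob_T hq]
  exact Es_Zs h1 hq ht _

end la
section main
variable {n t : ℕ} {q : Fin n → ℝ}

lemma markov2 (hq : ∀ j, 0 < q j) (h1 : ∑ j, q j = 1)
    (W : (Fin t → Fin n) → (Fin t → Fin n) → ℝ) (hW : ∀ v u, 0 ≤ W v u)
    (hE : Es q (fun v => Es q (fun u => W v u)) ≤ 5)
    (E : Set ((Fin t → Fin n) × (Fin t → Fin n)))
    (hWE : ∀ v u, W v u ≤ 15 → (v, u) ∈ E) : (2 / 3 : ℝ) ≤ iidProb2 t q q E := by
  have key : Es q (fun v => Es q (fun u => 1 + (-1 / 15) * W v u)) ≤ iidProb2 t q q E := by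
    unfold iidProb2 Es
    rw [Fintype.sum_prod_type]
    refine Finset.sum_le_sum fun v _ => ?_
    rw [Finset.mul_sum]
    refine Finset.sum_le_sum fun u _ => ?_
    have hv : 0 ≤ ∏ l, q (v l) := Finset.prod_nonneg fun _ _ => (hq _).le
    have hu : 0 ≤ ∏ l, q (u l) := Finset.prod_nonneg fun _ _ => (hq _).le
    rw [← mul_assoc]
    by_cases h : (v, u) ∈ E
    · rw [Set.indicator_of_mem h]
      apply mul_le_of_le_one_right (mul_nonneg hv hu)
      linarith [hW v u]
    · rw [Set.indicator_of_notMem h]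
      have : 15 < W v u := by
        by_contra hc; exact h (hWE v u (not_lt.1 hc))
      exact mul_nonpos_of_nonneg_of_nonpos (mul_nonneg hv hu) (by linarith)
  simp only [Es_add, Es_smul, Es_const h1] at key
  linarith

lemma gram_exp (h1 : ∑ j, q j = 1) (hq : ∀ j, 0 < q j) (ht : 0 < t) {m : ℕ}
    (P : Matrix (Fin n) (Fin m) ℝ) (k : ℝ) (hk : 0 ≤ k) :
    Es q (fun u : Fin t → Fin n =>
      ((((colSample t q u)ᵀ * P)ᵀ * ((colSample t q u)ᵀ * P) - Pᵀ * P).trace) ^ 2 +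
       k * frobeniusSq (((colSample t q u)ᵀ * P)ᵀ * ((colSample t q u)ᵀ * P) - Pᵀ * P))
    ≤ (1 + k) * ((∑ i, (∑ b, (P i b) ^ 2) ^ 2 / q i) / t) := by
  rw [Es_add, Es_smul]
  have a1 : ∀ u : Fin t → Fin n,
      (((colSample t q u)ᵀ * P)ᵀ * ((colSample t q u)ᵀ * P) - Pᵀ * P).trace
        = Zs q (fun i => ∑ b, (P i b) ^ 2) u - ∑ i, ∑ b, (P i b) ^ 2 := by
    intro u
    rw [trace_sub, ← frob_trace, ← frob_trace, frob_T hq]; rfl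
  have a2 : ∀ u : Fin t → Fin n,
      frobeniusSq (((colSample t q u)ᵀ * P)ᵀ * ((colSample t q u)ᵀ * P) - Pᵀ * P)
        = ∑ a, ∑ b, (Zs q (fun i => P i a * P i b) u - ∑ i, P i a * P i b) ^ 2 := by
    intro u
    unfold frobeniusSq
    refine Finset.sum_congr rfl fun a _ => Finset.sum_congr rfl fun b _ => ?_
    rw [Matrix.sub_apply, gram_T hq, Matrix.mul_apply]; rfl
  simp only [a1, a2, Es_sum]
  have b1 := Es_var h1 hq ht (fun i => ∑ b, (P i b) ^ 2)
  have b2 : ∑ a, ∑ b, Es q (fun u : Fin t → Fin n =>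
      (Zs q (fun i => P i a * P i b) u - ∑ i, P i a * P i b) ^ 2)
      ≤ (∑ i, (∑ b, (P i b) ^ 2) ^ 2 / q i) / t := by
    refine (Finset.sum_le_sum fun a _ => Finset.sum_le_sum fun b _ =>
      Es_var h1 hq ht (fun i => P i a * P i b)).trans (le_of_eq ?_)
    simp only [← Finset.sum_div]
    congr 1
    have : ∀ i, (∑ b, (P i b) ^ 2) ^ 2 / q i = ∑ a, ∑ b, (P i a * P i b) ^ 2 / q i := by
      intro i
      simp only [← Finset.sum_div]
      rw [sq (∑ b, (P i b) ^ 2), Finset.sum_mul_sum]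
      simp only [mul_pow]
    simp only [this]
    exact (Finset.sum_congr rfl fun a _ => Finset.sum_comm).trans Finset.sum_comm
  nlinarith [mul_le_mul_of_nonneg_left b2 hk]

lemma key_exp {A : Matrix (Fin n) (Fin n) ℝ} (hA : A.PosSemidef)
    (h1 : ∑ j, q j = 1) (hq : ∀ j, 0 < q j) (ht : 0 < t)
    (k : ℝ) (hk : 0 ≤ k) (g : ℝ) (hg0 : 0 ≤ g) (hg : ∀ i, A i i ≤ g * q i) :
    Es q (fun v : Fin t → Fin n => Es q (fun u : Fin t → Fin n =>
      ((((colSample t q u)ᵀ * (A * colSample t q v))ᵀ * ((colSample t q u)ᵀ * (A * colSample t q v))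
        - (A * colSample t q v)ᵀ * (A * colSample t q v)).trace) ^ 2 +
       k * frobeniusSq (((colSample t q u)ᵀ * (A * colSample t q v))ᵀ *
        ((colSample t q u)ᵀ * (A * colSample t q v))
        - (A * colSample t q v)ᵀ * (A * colSample t q v))))
    ≤ (1 + k) / t * (g * √(frobeniusSq A) * frobeniusSq A + g ^ 2 * frobeniusSq A / t) := by
  have ht' : (0 : ℝ) < t := by positivity
  refine (Es_mono (fun j => (hq j).le) _ _ fun v => gram_exp h1 hq ht _ k hk).trans ?_
  simp only [row_S hq]
  have e : (fun v : Fin t → Fin n => (1 + k) * ((∑ i, Zs q (fun j => A i j ^ 2) v ^ 2 / q i) / t))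
      = fun v => ((1 + k) / t) * ∑ i, (1 / q i) * Zs q (fun j => A i j ^ 2) v ^ 2 := by
    funext v
    have : ∀ i, Zs q (fun j => A i j ^ 2) v ^ 2 / q i = (1 / q i) * Zs q (fun j => A i j ^ 2) v ^ 2 :=
      fun i => by ring
    simp only [this]; ring
  rw [e, Es_smul, Es_sum]
  refine mul_le_mul_of_nonneg_left ?_ (by positivity)
  simp only [Es_smul]
  have hi : ∀ i, 1 / q i * Es q (fun v : Fin t → Fin n => Zs q (fun j => A i j ^ 2) v ^ 2) ≤
      (g * √(frobeniusSq A) + g ^ 2 / t) * ∑ j, A i j ^ 2 := by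
    intro i
    have hz := Es_Zs_sq (t := t) h1 hq ht (fun j => A i j ^ 2)
    have hr := psd_row hA i
    have hs0 : 0 ≤ ∑ j, A i j ^ 2 := by positivity
    have hr2 : (∑ j, A i j ^ 2) ^ 2 ≤ (g * q i) * (√(frobeniusSq A) * ∑ j, A i j ^ 2) :=
      hr.trans (mul_le_mul_of_nonneg_right (hg i) (by positivity))
    have hc : ∑ j, (A i j ^ 2) ^ 2 / q j ≤ (g * q i) * g * ∑ j, A i j ^ 2 := by
      rw [Finset.mul_sum]
      refine Finset.sum_le_sum fun j _ => ?_
      rw [div_le_iff₀ (hq j)]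
      have h3 : A i j ^ 2 ≤ (g * q i) * (g * q j) :=
        (psd_entry hA i j).trans (mul_le_mul (hg i) (hg j) (psd_diag hA j)
          (mul_nonneg hg0 (hq i).le))
      nlinarith [mul_le_mul_of_nonneg_right h3 (sq_nonneg (A i j))]
    have hqi := hq i
    rw [one_div, inv_mul_le_iff₀ hqi]
    refine hz.trans ?_
    have hc2 := div_le_div_of_nonneg_right hc ht'.le
    calc _ ≤ (g * q i) * (√(frobeniusSq A) * ∑ j, A i j ^ 2)
          + (g * q i) * g * (∑ j, A i j ^ 2) / t := add_le_add hr2 hc2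
      _ = _ := by ring
  refine (Finset.sum_le_sum fun i _ => hi i).trans (le_of_eq ?_)
  rw [← Finset.mul_sum]
  change _ * frobeniusSq A = _
  ring

lemma det_part {m m' k : ℕ} (a b : Matrix (Fin m) (Fin t) ℝ) (c d : Matrix (Fin m') (Fin t) ℝ)
    (X : Matrix (Fin t) (Fin t) ℝ) (hX1 : Xᵀ = X) (hX2 : X * X = X) (hXk : X.rank ≤ k)
    (F ε η : ℝ) (hF : 0 < F) (hε : 0 < ε) (hη : 0 < η) (hη1 : η ≤ 1)
    (ha : frobeniusSq a ≤ 15 * F) (hb : frobeniusSq b ≤ 15 * (η * F))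
    (hc : frobeniusSq c ≤ 15 * F) (hd : frobeniusSq d ≤ 15 * (η * F))
    (h1 : ((aᵀ * a - cᵀ * c).trace) ^ 2 + k * frobeniusSq (aᵀ * a - cᵀ * c) ≤ 15 * (ε * F) ^ 2) :
    |frobeniusSq ((a + b) - (a + b) * X) - frobeniusSq ((c + d) - (c + d) * X)|
      ≤ 100 * (ε + √η) * F := by
  have hs : 0 < √η := Real.sqrt_pos.2 hη
  have hss : √η * √η = η := Real.mul_self_sqrt hη.le
  have hs1 : √η ≤ 1 := Real.sqrt_le_one.2 hη1
  have gen : ∀ {m : ℕ} (a b : Matrix (Fin m) (Fin t) ℝ), frobeniusSq a ≤ 15 * F →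
      frobeniusSq b ≤ 15 * (η * F) →
      |frobeniusSq ((a + b) - (a + b) * X) - frobeniusSq (a - a * X)| ≤ 45 * √η * F := by
    intro m a b ha hb
    have e : (a + b) - (a + b) * X = (a - a * X) + (b - b * X) := by
      rw [Matrix.add_mul]; abel
    rw [e]
    refine (frob_add_sub_le _ _ _ hs).trans ?_
    have p1 := (frob_proj_le a X hX1 hX2).trans ha
    have p2 := (frob_proj_le b X hX1 hX2).trans hb
    have p3 : frobeniusSq (b - b * X) / √η ≤ 15 * (√η * F) := by
      rw [div_le_iff₀ hs]
      calc _ ≤ _ := p2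
        _ = _ := by linear_combination (-15 * F) * hss
    have p4 : η * F ≤ √η * F := by
      apply mul_le_mul_of_nonneg_right _ hF.le
      nlinarith
    have p5 := mul_le_mul_of_nonneg_left p1 hs.le
    linarith
  have g1 := gen a b ha hb
  have g2 := gen c d hc hd
  set D := aᵀ * a - cᵀ * c with hD
  have e : frobeniusSq (a - a * X) - frobeniusSq (c - c * X) = D.trace - (D * X).trace := by
    rw [frob_proj a X hX1 hX2, frob_proj c X hX1 hX2, hD, Matrix.sub_mul, trace_sub, trace_sub]
    ring
  have q0 := frob_nonneg D
  have q1 : |D.trace| ≤ 4 * (ε * F) := by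
    apply abs_le_of_sq_le_sq _ (by positivity)
    have : 0 ≤ (k : ℝ) * frobeniusSq D := by positivity
    nlinarith [sq_nonneg (ε * F)]
  have q2 : |(D * X).trace| ≤ 4 * (ε * F) := by
    apply abs_le_of_sq_le_sq _ (by positivity)
    have h := trace_mul_sq_le D X
    rw [hX1, frob_X X hX1 hX2] at h
    have hk : (X.rank : ℝ) ≤ k := by exact_mod_cast hXk
    have := mul_le_mul_of_nonneg_left hk q0
    nlinarith [sq_nonneg (ε * F), sq_nonneg D.trace]
  rw [abs_le] at *
  have : 0 < √η * F := by positivity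
  have : 0 < ε * F := by positivity
  constructor <;> nlinarith

end main
lemma five_le {a b c d e : ℝ} (ha : 0 ≤ a) (hb : 0 ≤ b) (hc : 0 ≤ c) (hd : 0 ≤ d) (he : 0 ≤ e)
    (h : a + (b + (c + (d + e))) ≤ 15) : a ≤ 15 ∧ b ≤ 15 ∧ c ≤ 15 ∧ d ≤ 15 ∧ e ≤ 15 := by
  refine ⟨?_, ?_, ?_, ?_, ?_⟩ <;> linarith

set_option maxHeartbeats 4000000 in
/-- Robust row projection-cost preservation: the row sample R of the column sketch C
preserves, for all rank-k orthogonal projections X, the row projection cost of C up to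
additive error c₁(ε+√η)‖A‖_F², with probability at least 2/3. -/
theorem robust_row_pcp :
    ∃ c₀ c₁ : ℝ, 0 < c₀ ∧ 0 < c₁ ∧
      ∀ (n : ℕ) (A N : Matrix (Fin n) (Fin n) ℝ) (η ε φ : ℝ) (k t : ℕ),
        A.PosSemidef →
        0 < η → η ≤ 1 →
        frobeniusSq N ≤ η * frobeniusSq A →
        (∀ j, (∑ i, (N i j)^2) ≤ ∑ i, (A i j)^2) →
        (∀ j, 0 < (A + N) j j) →
        IsGreatest (Set.range fun j => A j j / (A + N) j j) φ →
        0 < ε → ε < 1 → 1 ≤ k →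
        c₀ * φ * Real.sqrt n * (k : ℝ)^2 * (Real.log n)^2 / ε^2 ≤ (t : ℝ) →
        (2/3 : ℝ) ≤
          iidProb2 t (fun j => (A + N) j j / (A + N).trace)
              (fun j => (A + N) j j / (A + N).trace)
            {w : (Fin t → Fin n) × (Fin t → Fin n) |
              ∀ X : Matrix (Fin t) (Fin t) ℝ, Xᵀ = X → X * X = X → X.rank ≤ k →
                |frobeniusSq
                    ((colSample t (fun j => (A + N) j j / (A + N).trace) w.2)ᵀ *
                        ((A + N) * colSample t (fun j => (A + N) j j / (A + N).trace) w.1) -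
                      ((colSample t (fun j => (A + N) j j / (A + N).trace) w.2)ᵀ *
                        ((A + N) * colSample t (fun j => (A + N) j j / (A + N).trace) w.1)) * X) -
                  frobeniusSq
                    ((A + N) * colSample t (fun j => (A + N) j j / (A + N).trace) w.1 -
                      ((A + N) * colSample t (fun j => (A + N) j j / (A + N).trace) w.1) * X)| ≤
                c₁ * (ε + Real.sqrt η) * frobeniusSq A} := by
  refine ⟨100, 100, by norm_num, by norm_num, ?_⟩
  intro n A N η ε φ k t hA hη hη1 hN _ hB hφ hε hε1 hk ht
  obtain ⟨⟨j0, hj0⟩, hφ2⟩ := hφ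
  have htr : 0 < (A + N).trace := Finset.sum_pos (fun j _ => hB j) ⟨j0, Finset.mem_univ _⟩
  set G := (A + N).trace with hG
  set q : Fin n → ℝ := fun j => (A + N) j j / G with hqdef
  have hq : ∀ j, 0 < q j := fun j => div_pos (hB j) htr
  have h1 : ∑ j, q j = 1 := by
    simp only [hqdef, ← Finset.sum_div]
    exact div_self htr.ne'
  have hφd : ∀ j, A j j ≤ φ * (A + N) j j := fun j => by
    have := hφ2 ⟨j, rfl⟩
    exact (div_le_iff₀ (hB j)).1 this
  set F := frobeniusSq A with hFdef
  have hF0 : 0 ≤ F := frob_nonneg A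
  have htrsq := trace_sq_le (A + N)
  rw [← hG] at htrsq
  have hBF : frobeniusSq (A + N) ≤ 4 * F := by
    have := frob_add_le A N
    nlinarith
  have hn0 : 0 < n := j0.pos
  have hF : 0 < F := by
    rcases hF0.lt_or_eq with h | h
    · exact h
    · exfalso
      have h5 := frob_nonneg (A + N)
      have : frobeniusSq (A + N) = 0 := by linarith
      rw [this] at htrsq
      nlinarith
  have hφ0 : 0 ≤ φ := hj0 ▸ div_nonneg (psd_diag hA j0) (hB j0).le
  by_cases hn1 : n = 1
  · -- exact equality
    subst hn1
    refine markov2 hq h1 (fun _ _ => 0) (fun _ _ => le_rfl) (by simp [Es]) _ ?_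
    intro v u _ X _ _ _
    rw [Matrix.mul_assoc, ← Matrix.mul_sub, frob_T hq]
    have hq1 : ∀ j, q j = 1 := fun j => by
      rw [Fin.sum_univ_one] at h1
      rw [Subsingleton.elim j 0, h1]
    have : ∀ M : Matrix (Fin 1) (Fin t) ℝ, Zs q (fun i => ∑ b, (M i b) ^ 2) u - frobeniusSq M = 0 := by
      intro M
      rcases Nat.eq_zero_or_pos t with h0 | h0
      · subst h0
        simp [Zs, frobeniusSq]
      · have h0' : (t : ℝ) ≠ 0 := by positivity
        simp only [Zs, hq1, frobeniusSq, Subsingleton.elim (u _) 0, Fin.sum_univ_one,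
          Finset.sum_const, Finset.card_univ, Fintype.card_fin, nsmul_eq_mul]
        field_simp
        simp
    rw [this]
    simp only [abs_zero]
    positivity
  have hn2 : 2 ≤ n := by omega
  have hφpos : 0 < φ := by
    rcases hφ0.lt_or_eq with h | h
    · exact h
    · exfalso
      have hz : ∀ i, A i i = 0 := fun i =>
        le_antisymm (by have := hφd i; rw [← h, zero_mul] at this; exact this) (psd_diag hA i)
      have : F = 0 := by
        rw [hFdef, frobeniusSq]
        refine Finset.sum_eq_zero fun i _ => Finset.sum_eq_zero fun j _ => ?_
        have := psd_entry hA i j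
        rw [hz i, zero_mul] at this
        exact le_antisymm this (sq_nonneg _)
      linarith
  have hn' : (2 : ℝ) ≤ n := by exact_mod_cast hn2
  have hlog : (1 / 4 : ℝ) ≤ (Real.log n) ^ 2 := by
    have h2 : Real.log 2 ≤ Real.log n := Real.log_le_log (by norm_num) hn'
    have := Real.log_two_gt_d9
    nlinarith
  have hsn : 0 < √(n : ℝ) := Real.sqrt_pos.2 (by linarith)
  have hk1 : (1 : ℝ) ≤ k := by exact_mod_cast hk
  have ht2 : 25 * (φ * √n) * k ^ 2 ≤ t * ε ^ 2 := by
    rw [div_le_iff₀ (by positivity)] at ht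
    refine le_trans ?_ ht
    have : 0 ≤ φ * √n * (k : ℝ) ^ 2 := by positivity
    nlinarith [mul_le_mul_of_nonneg_left hlog this]
  have htpos' : (0 : ℝ) < t := by
    have : 0 < 25 * (φ * √n) * (k : ℝ) ^ 2 := by positivity
    by_contra hc
    have : (t : ℝ) * ε ^ 2 ≤ 0 := mul_nonpos_of_nonpos_of_nonneg (not_lt.1 hc) (sq_nonneg _)
    linarith
  have htpos : 0 < t := by exact_mod_cast htpos'
  have hGle : G ≤ 2 * √n * √F := by
    apply le_of_sq_le_sq _ (by positivity)
    rw [mul_pow, mul_pow, Real.sq_sqrt (by positivity), Real.sq_sqrt hF0]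
    nlinarith [mul_le_mul_of_nonneg_left hBF (by positivity : (0 : ℝ) ≤ n)]
  have hgi : ∀ i, A i i ≤ (φ * G) * q i := fun i => by
    refine (hφd i).trans (le_of_eq ?_)
    simp only [hqdef]
    field_simp
  have hexp := key_exp (t := t) hA h1 hq htpos k (by positivity) (φ * G) (by positivity) hgi
  rw [← hFdef] at hexp
  have hfin : (1 + (k : ℝ)) / t * (φ * G * √F * F + (φ * G) ^ 2 * F / t) ≤ (ε * F) ^ 2 := by
    set s := φ * √n / t with hs
    have hs0 : 0 < s := by positivity
    have hsle : 25 * s * k ^ 2 ≤ ε ^ 2 := by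
      have : 25 * s * k ^ 2 = 25 * (φ * √n) * k ^ 2 / t := by rw [hs]; ring
      rw [this, div_le_iff₀ htpos']; linarith
    have hu : φ * G / t ≤ 2 * s * √F := by
      have : 2 * s * √F = φ * (2 * √n * √F) / t := by rw [hs]; ring
      rw [this]; gcongr
    have hu0 : 0 ≤ φ * G / t := by positivity
    have hFF : √F * √F = F := Real.mul_self_sqrt hF0
    have e : (1 + (k : ℝ)) / t * (φ * G * √F * F + (φ * G) ^ 2 * F / t)
      = (1 + k) * F * ((φ * G / t) * √F + (φ * G / t) ^ 2) := by
      field_simp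
    rw [e]
    have hp : (φ * G / t) * √F + (φ * G / t) ^ 2 ≤ 2 * s * F + 4 * s ^ 2 * F := by
      have i1 : (φ * G / t) * √F ≤ 2 * s * √F * √F := by gcongr
      have i2 : (φ * G / t) ^ 2 ≤ (2 * s * √F) ^ 2 := by gcongr
      have i3 : 2 * s * √F * √F = 2 * s * F := by rw [mul_assoc, hFF]
      have i4 : (2 * s * √F) ^ 2 = 4 * s ^ 2 * F := by
        rw [mul_pow, sq (√F), hFF]; ring
      linarith
    have hkk : (k : ℝ) ≤ k ^ 2 := by nlinarith
    have hsk : s ≤ s * k ^ 2 := by nlinarith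
    have hs1 : s ≤ 1 := by nlinarith
    have hskk : s * k ≤ s * k ^ 2 := by gcongr
    have hp2 : 2 * s * F + 4 * s ^ 2 * F ≤ 6 * s * F := by nlinarith [mul_pos hs0 hF]
    calc (1 + (k : ℝ)) * F * ((φ * G / t) * √F + (φ * G / t) ^ 2)
        ≤ (1 + k) * F * (6 * s * F) := by
          apply mul_le_mul_of_nonneg_left (hp.trans hp2) (by positivity)
      _ = 6 * (s + s * k) * F ^ 2 := by ring
      _ ≤ ε ^ 2 * F ^ 2 := by
          apply mul_le_mul_of_nonneg_right _ (sq_nonneg _)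
          nlinarith
      _ = _ := by ring
  have hexp2 := hexp.trans hfin
  have hNS := Es_frob_S (t := t) h1 hq htpos N
  have hAS := Es_frob_S (t := t) h1 hq htpos A
  have hTNS : Es q (fun v : Fin t → Fin n => Es q (fun u : Fin t → Fin n =>
      frobeniusSq ((colSample t q u)ᵀ * (N * colSample t q v)))) = frobeniusSq N := by
    simp only [Es_frob_T h1 hq htpos, hNS]
  have hTAS : Es q (fun v : Fin t → Fin n => Es q (fun u : Fin t → Fin n =>
      frobeniusSq ((colSample t q u)ᵀ * (A * colSample t q v)))) = F := by
    simp only [Es_frob_T h1 hq htpos, hAS, hFdef]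
  have hεF : 0 < (ε * F) ^ 2 := by positivity
  have hηF : 0 < η * F := by positivity
  refine markov2 hq h1 (fun v u =>
    (1 / (ε * F) ^ 2) * (((((colSample t q u)ᵀ * (A * colSample t q v))ᵀ *
        ((colSample t q u)ᵀ * (A * colSample t q v))
        - (A * colSample t q v)ᵀ * (A * colSample t q v)).trace) ^ 2 +
       k * frobeniusSq (((colSample t q u)ᵀ * (A * colSample t q v))ᵀ *
        ((colSample t q u)ᵀ * (A * colSample t q v))
        - (A * colSample t q v)ᵀ * (A * colSample t q v)))
    + ((1 / (η * F)) * frobeniusSq ((colSample t q u)ᵀ * (N * colSample t q v))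
    + ((1 / (η * F)) * frobeniusSq (N * colSample t q v)
    + ((1 / F) * frobeniusSq ((colSample t q u)ᵀ * (A * colSample t q v))
    + (1 / F) * frobeniusSq (A * colSample t q v))))) ?_ ?_ _ ?_
  · intro v u
    have := fun {m n : ℕ} (M : Matrix (Fin m) (Fin n) ℝ) => frob_nonneg M
    have i1 := this ((colSample t q u)ᵀ * (N * colSample t q v))
    have i2 := this (N * colSample t q v)
    have i3 := this ((colSample t q u)ᵀ * (A * colSample t q v))
    have i4 := this (A * colSample t q v)
    have i5 := this (((colSample t q u)ᵀ * (A * colSample t q v))ᵀ *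
        ((colSample t q u)ᵀ * (A * colSample t q v))
        - (A * colSample t q v)ᵀ * (A * colSample t q v))
    positivity
  · have c1 : ∀ (c : ℝ) (H : (Fin t → Fin n) → (Fin t → Fin n) → ℝ),
        Es q (fun v => Es q (fun u => c * H v u)) = c * Es q (fun v => Es q (fun u => H v u)) := by
      intro c H; simp only [Es_smul]
    have c2 : ∀ (H K : (Fin t → Fin n) → (Fin t → Fin n) → ℝ),
        Es q (fun v => Es q (fun u => H v u + K v u)) =
          Es q (fun v => Es q (fun u => H v u)) + Es q (fun v => Es q (fun u => K v u)) := by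
      intro H K; simp only [Es_add]
    rw [c2, c2, c2, c2, c1, c1, c1, c1, c1, hTNS, hTAS]
    simp only [Es_const h1]
    rw [hNS, hAS, ← hFdef]
    have b1 := mul_le_mul_of_nonneg_left hexp2 (one_div_pos.2 hεF).le
    rw [one_div_mul_cancel hεF.ne'] at b1
    have b2 := mul_le_mul_of_nonneg_left hN (one_div_pos.2 hηF).le
    rw [one_div_mul_cancel hηF.ne'] at b2
    have b3 : 1 / F * F = 1 := one_div_mul_cancel hF.ne'
    linarith
  · intro v u hW
    have i1 := frob_nonneg ((colSample t q u)ᵀ * (N * colSample t q v))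
    have i2 := frob_nonneg (N * colSample t q v)
    have i3 := frob_nonneg ((colSample t q u)ᵀ * (A * colSample t q v))
    have i4 := frob_nonneg (A * colSample t q v)
    have i5 := frob_nonneg (((colSample t q u)ᵀ * (A * colSample t q v))ᵀ *
        ((colSample t q u)ᵀ * (A * colSample t q v))
        - (A * colSample t q v)ᵀ * (A * colSample t q v))
    have i6 : 0 ≤ ((((colSample t q u)ᵀ * (A * colSample t q v))ᵀ *
        ((colSample t q u)ᵀ * (A * colSample t q v))
        - (A * colSample t q v)ᵀ * (A * colSample t q v)).trace) ^ 2 +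
       k * frobeniusSq (((colSample t q u)ᵀ * (A * colSample t q v))ᵀ *
        ((colSample t q u)ᵀ * (A * colSample t q v))
        - (A * colSample t q v)ᵀ * (A * colSample t q v)) := by positivity
    have r : ∀ c x : ℝ, 0 < c → 1 / c * x ≤ 15 → x ≤ 15 * c := by
      intro c x hc h
      rw [one_div, inv_mul_le_iff₀ hc] at h
      linarith
    have s1 := mul_nonneg (one_div_pos.2 hηF).le i1
    have s2 := mul_nonneg (one_div_pos.2 hηF).le i2
    have s3 := mul_nonneg (one_div_pos.2 hF).le i3
    have s4 := mul_nonneg (one_div_pos.2 hF).le i4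
    have s6 := mul_nonneg (one_div_pos.2 hεF).le i6
    obtain ⟨f6, f1, f2, f3, f4⟩ := five_le s6 s1 s2 s3 s4 hW
    intro X hX1 hX2 hXk
    have := det_part (k := k) ((colSample t q u)ᵀ * (A * colSample t q v))
      ((colSample t q u)ᵀ * (N * colSample t q v)) (A * colSample t q v) (N * colSample t q v)
      X hX1 hX2 hXk F ε η hF hε hη hη1 (r _ _ hF f3) (r _ _ hηF f1)
      (r _ _ hF f4) (r _ _ hηF f2) (r _ _ hεF f6)
    rw [← Matrix.mul_add, ← Matrix.add_mul] at this
    exact this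
end

section
/- There are absolute constants c₁ > 0 and c₂ > 0 with the following property. Let n ≥ 2, let A be an n×n real positive semidefinite matrix and N an n×n real matrix such that ‖N‖_F² ≤ η ‖A‖_F² for some 0 < η ≤ 1 and ‖N_{·,j}‖₂² ≤ ‖A_{·,j}‖₂² for every j; assume (A+N)_{jj} > 0 for all j, and set q_j = (A+N)_{jj}/tr(A+N) and φ = max_j A_{jj}/(A+N)_{jj}. Let t ≥ 1 be an integer, sample indices j₁,…,j_t independently with ℙ(j_l = j) = q_j, and let AT be the n×t matrix with l-th column A_{·,j_l}/√(t·q_{j_l}). Then for every fixed row index i ∈ {1,…,n}, with probability at least 1 − n^{−c₂}: ‖(AT)_{i,·}‖₂² ≤ c₁ · log(n) · max{ ‖A_{i,·}‖₂² , φ·√n·‖A‖_F·A_{ii}/t }. -/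
open Matrix

lemma chernoff_aux (n t : ℕ) (q x : Fin n → ℝ) (M L : ℝ) (hq : ∀ j, 0 ≤ q j)
    (hs : ∑ j, q j = 1) (hM : 0 < M) (hx0 : ∀ j, 0 ≤ x j) (hx : ∀ j, x j ≤ 2 * M)
    (hmean : (t : ℝ) * ∑ j, q j * x j ≤ M) :
    1 - Real.exp (1 - L / 2) ≤ iidProb t q {v : Fin t → Fin n | ∑ l, x (v l) ≤ L * M} := by
  have h1 : ∑ v : Fin t → Fin n, ∏ l, q (v l) = 1 := by
    have h := Fintype.sum_pow q t
    rw [hs, one_pow] at h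
    exact h.symm
  have h2 : ∑ v : Fin t → Fin n, ∏ l, (q (v l) * Real.exp (x (v l) / (2 * M)))
      ≤ Real.exp 1 := by
    rw [← Fintype.sum_pow (fun j => q j * Real.exp (x j / (2 * M))) t]
    have h3 : ∑ j, q j * Real.exp (x j / (2 * M)) ≤ Real.exp ((∑ j, q j * x j) / M) := by
      have h4 : ∀ j, q j * Real.exp (x j / (2 * M)) ≤ q j + (q j * x j) / M := by
        intro j
        have hy0 : 0 ≤ x j / (2 * M) := by have := hx0 j; positivity
        have hy1 : x j / (2 * M) ≤ 1 := by
          rw [div_le_one (by positivity)]; exact hx j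
        have hb := Real.abs_exp_sub_one_le (x := x j / (2 * M)) (by rw [abs_of_nonneg hy0]; exact hy1)
        rw [abs_of_nonneg hy0] at hb
        have hb' := (abs_le.mp hb).2
        have he : 2 * (x j / (2 * M)) = x j / M := by field_simp
        rw [he] at hb'
        calc q j * Real.exp (x j / (2 * M)) ≤ q j * (1 + x j / M) :=
              mul_le_mul_of_nonneg_left (by linarith) (hq j)
          _ = q j + (q j * x j) / M := by ring
      calc ∑ j, q j * Real.exp (x j / (2 * M)) ≤ ∑ j, (q j + (q j * x j) / M) :=
            Finset.sum_le_sum fun j _ => h4 j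
        _ = (∑ j, q j * x j) / M + 1 := by
            rw [Finset.sum_add_distrib, hs, Finset.sum_div, add_comm]
        _ ≤ _ := Real.add_one_le_exp _
    calc (∑ j, q j * Real.exp (x j / (2 * M))) ^ t
        ≤ (Real.exp ((∑ j, q j * x j) / M)) ^ t :=
          pow_le_pow_left₀ (Finset.sum_nonneg fun j _ => mul_nonneg (hq j) (Real.exp_pos _).le) h3 t
      _ = Real.exp (t * ((∑ j, q j * x j) / M)) := (Real.exp_nat_mul _ _).symm
      _ ≤ Real.exp 1 := by
          apply Real.exp_le_exp.mpr
          rw [← mul_div_assoc, div_le_one hM]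
          exact hmean
  have h5 : ∀ v : Fin t → Fin n,
      ∏ l, q (v l) - Real.exp (-(L / 2)) * ∏ l, (q (v l) * Real.exp (x (v l) / (2 * M)))
      ≤ Set.indicator {v : Fin t → Fin n | ∑ l, x (v l) ≤ L * M} (fun v => ∏ l, q (v l)) v := by
    intro v
    have hp : 0 ≤ ∏ l, q (v l) := Finset.prod_nonneg fun l _ => hq _
    rw [Finset.prod_mul_distrib, ← Real.exp_sum, ← Finset.sum_div]
    by_cases hv : v ∈ {v : Fin t → Fin n | ∑ l, x (v l) ≤ L * M}
    · rw [Set.indicator_of_mem hv]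
      have : 0 ≤ Real.exp (-(L / 2)) * ((∏ l, q (v l)) * Real.exp ((∑ l, x (v l)) / (2 * M))) := by
        positivity
      linarith
    · rw [Set.indicator_of_notMem hv]
      have hv' : L * M < ∑ l, x (v l) := by simpa using hv
      have h6 : L / 2 ≤ (∑ l, x (v l)) / (2 * M) := by
        rw [le_div_iff₀ (by positivity)]; nlinarith
      have h7 : 1 ≤ Real.exp (-(L / 2)) * Real.exp ((∑ l, x (v l)) / (2 * M)) := by
        rw [← Real.exp_add]; apply Real.one_le_exp; linarith
      nlinarith
  have h8 := Finset.sum_le_sum fun v (_ : v ∈ Finset.univ) => h5 v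
  rw [Finset.sum_sub_distrib, h1, ← Finset.mul_sum] at h8
  have h9 : Real.exp (1 - L / 2) = Real.exp (-(L / 2)) * Real.exp 1 := by
    rw [← Real.exp_add]; ring_nf
  have h10 := mul_le_mul_of_nonneg_left h2 (Real.exp_pos (-(L / 2))).le
  unfold iidProb
  linarith

lemma trace_aux {n : ℕ} (B : Matrix (Fin n) (Fin n) ℝ) :
    B.trace ≤ Real.sqrt n * Real.sqrt (frobeniusSq B) := by
  rw [← Real.sqrt_mul (Nat.cast_nonneg n)]
  apply Real.le_sqrt_of_sq_le
  have h := sq_sum_le_card_mul_sum_sq (s := (Finset.univ : Finset (Fin n))) (f := fun i => B i i)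
  simp only [Finset.card_univ, Fintype.card_fin] at h
  have h2 : ∑ i, (B i i) ^ 2 ≤ frobeniusSq B := by
    unfold frobeniusSq
    refine Finset.sum_le_sum fun i _ => ?_
    exact Finset.single_le_sum (f := fun j => (B i j) ^ 2) (fun j _ => sq_nonneg _) (Finset.mem_univ i)
  calc B.trace ^ 2 = (∑ i, B i i) ^ 2 := rfl
    _ ≤ _ := h
    _ ≤ _ := mul_le_mul_of_nonneg_left h2 (Nat.cast_nonneg n)

lemma psd_entry_aux {n : ℕ} (A : Matrix (Fin n) (Fin n) ℝ) (hA : A.PosSemidef) (i j : Fin n) :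
    (A i j) ^ 2 ≤ A i i * A j j := by
  have hsym : A j i = A i j := by simpa using hA.1.apply i j
  have h := (hA.submatrix ![i, j]).det_nonneg
  rw [Matrix.det_fin_two] at h
  simp [hsym] at h
  nlinarith

/-- Row norms of the diagonal-sampled column sketch: for each fixed row i, with
probability at least 1 − n^{−c₂}, the squared norm of the i-th row of AT is at most
c₁ log(n) · max(‖A_{i,·}‖₂², φ√n‖A‖_F·A_{ii}/t). -/
theorem row_norm_bound_of_column_sample :
    ∃ c₁ c₂ : ℝ, 0 < c₁ ∧ 0 < c₂ ∧
      ∀ (n : ℕ) (A N : Matrix (Fin n) (Fin n) ℝ) (η φ : ℝ) (t : ℕ),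
        2 ≤ n →
        A.PosSemidef →
        0 < η → η ≤ 1 →
        frobeniusSq N ≤ η * frobeniusSq A →
        (∀ j, (∑ i, (N i j)^2) ≤ ∑ i, (A i j)^2) →
        (∀ j, 0 < (A + N) j j) →
        IsGreatest (Set.range fun j => A j j / (A + N) j j) φ →
        1 ≤ t →
        ∀ i : Fin n,
          1 - (n : ℝ) ^ (-c₂) ≤
            iidProb t (fun j => (A + N) j j / (A + N).trace)
              {v : Fin t → Fin n |
                ∑ l, ((A * colSample t (fun j => (A + N) j j / (A + N).trace) v) i l)^2 ≤
                  c₁ * Real.log n *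
                    max (∑ j, (A i j)^2)
                      (φ * Real.sqrt n * Real.sqrt (frobeniusSq A) * A i i / t)} := by
  refine ⟨6, 1, by norm_num, by norm_num, ?_⟩
  intro n A N η φ t hn hA hη0 hη1 hF _ hpos hφ ht i
  have hn0 : (0 : ℝ) < n := by exact_mod_cast (by omega : 0 < n)
  have ht0 : (0 : ℝ) < t := by exact_mod_cast ht
  have hT : 0 < (A + N).trace :=
    Finset.sum_pos (fun j _ => hpos j) ⟨i, Finset.mem_univ i⟩
  set q : Fin n → ℝ := fun j => (A + N) j j / (A + N).trace with hqdef
  have hqpos : ∀ j, 0 < q j := fun j => div_pos (hpos j) hT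
  have hqs : ∑ j, q j = 1 := by
    rw [hqdef, ← Finset.sum_div]
    exact div_self hT.ne'
  have hF0 : 0 ≤ frobeniusSq A :=
    Finset.sum_nonneg fun a _ => Finset.sum_nonneg fun b _ => sq_nonneg _
  have hTr : (A + N).trace ≤ 2 * (Real.sqrt n * Real.sqrt (frobeniusSq A)) := by
    rw [Matrix.trace_add]
    have h1 := trace_aux A
    have h2 := trace_aux N
    have h3 : Real.sqrt (frobeniusSq N) ≤ Real.sqrt (frobeniusSq A) :=
      Real.sqrt_le_sqrt (by nlinarith)
    have h4 := mul_le_mul_of_nonneg_left h3 (Real.sqrt_nonneg (n : ℝ))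
    linarith
  have hdiag : ∀ j, 0 ≤ A j j := fun j => hA.diag_nonneg
  have hφj : ∀ j, A j j / (A + N) j j ≤ φ := fun j => hφ.2 ⟨j, rfl⟩
  have hφ0 : 0 ≤ φ := le_trans (div_nonneg (hdiag i) (hpos i).le) (hφj i)
  set x : Fin n → ℝ := fun j => (A i j) ^ 2 / (t * q j) with hxdef
  set M : ℝ := max (∑ j, (A i j)^2)
      (φ * Real.sqrt n * Real.sqrt (frobeniusSq A) * A i i / t) with hMdef
  have hset : {v : Fin t → Fin n | ∑ l, ((A * colSample t q v) i l)^2 ≤ 6 * Real.log n * M}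
      = {v : Fin t → Fin n | ∑ l, x (v l) ≤ 6 * Real.log n * M} := by
    ext v
    have : ∀ l, ((A * colSample t q v) i l)^2 = x (v l) := by
      intro l
      have h : (A * colSample t q v) i l = A i (v l) * (Real.sqrt (t * q (v l)))⁻¹ := by
        simp [Matrix.mul_apply, colSample]
      rw [h, mul_pow, inv_pow, Real.sq_sqrt (mul_pos ht0 (hqpos _)).le]
      rfl
    simp only [Set.mem_setOf_eq, this]
  rw [hset]
  have hx0 : ∀ j, 0 ≤ x j := fun j => div_nonneg (sq_nonneg _) (mul_pos ht0 (hqpos j)).le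
  have hxM : ∀ j, x j ≤ 2 * M := by
    intro j
    have h1 : x j ≤ 2 * (φ * Real.sqrt n * Real.sqrt (frobeniusSq A) * A i i / t) := by
      calc x j ≤ (A i i * A j j) / (t * q j) :=
            div_le_div_of_nonneg_right (psd_entry_aux A hA i j) (mul_pos ht0 (hqpos j)).le
        _ = (A j j / (A + N) j j) * (A i i / t) * (A + N).trace := by
            have := (hpos j).ne'
            simp only [hqdef]
            field_simp
        _ ≤ φ * (A i i / t) * (2 * (Real.sqrt n * Real.sqrt (frobeniusSq A))) := by
            have h0 : 0 ≤ A i i / t := div_nonneg (hdiag i) ht0.le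
            exact mul_le_mul (mul_le_mul_of_nonneg_right (hφj j) h0) hTr hT.le (mul_nonneg hφ0 h0)
        _ = _ := by ring
    have h2 := le_max_right (∑ j, (A i j)^2)
      (φ * Real.sqrt n * Real.sqrt (frobeniusSq A) * A i i / t)
    linarith
  have hmean : (t : ℝ) * ∑ j, q j * x j = ∑ j, (A i j) ^ 2 := by
    rw [Finset.mul_sum]
    refine Finset.sum_congr rfl fun j _ => ?_
    have := (hqpos j).ne'
    simp only [hxdef]
    field_simp
  have hmM : (t : ℝ) * ∑ j, q j * x j ≤ M := by rw [hmean]; exact le_max_left _ _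
  have hM0 : 0 ≤ M := le_trans (Finset.sum_nonneg fun j _ => sq_nonneg _) (le_max_left _ _)
  rcases hM0.lt_or_eq with hMp | hMz
  · refine le_trans ?_ (chernoff_aux n t q x M (6 * Real.log n) (fun j => (hqpos j).le) hqs hMp
      hx0 hxM hmM)
    rw [Real.rpow_def_of_pos hn0]
    have hl : Real.log 2 ≤ Real.log n :=
      Real.log_le_log (by norm_num) (by exact_mod_cast hn)
    have hl2 := Real.log_two_gt_d9
    have := Real.exp_le_exp.mpr (by linarith : 1 - 6 * Real.log n / 2 ≤ Real.log n * -1)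
    linarith
  · have hxz : ∀ j, x j = 0 := fun j => le_antisymm (by have := hxM j; linarith) (hx0 j)
    have h1 : ∑ v : Fin t → Fin n, ∏ l, q (v l) = 1 := by
      have h := Fintype.sum_pow q t
      rw [hqs, one_pow] at h
      exact h.symm
    have h2 : {v : Fin t → Fin n | ∑ l, x (v l) ≤ 6 * Real.log n * M} = Set.univ := by
      ext v; simp [hxz, ← hMz]
    rw [h2, iidProb]
    simp only [Set.indicator_univ, h1]
    have := Real.rpow_nonneg hn0.le (-1)
    linarith
end
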